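/- Let S* be a canonical optimal schedule for the index order, let R_x = [τ_x, τ_{x+1}) be a region of S*, let J_x = {j | S_j ∈ R_x}, and let j_x be the largest-indexed job in J_x attaining Δ_x = max_{j ∈ J_x}(e_max^j + ∑_{j' < j} w_{j'}). Suppose the last interval I_k of R_x (the interval I_k intersecting R_x with τ_{x+1} ≤ s_{k+1}) is partially utilized (at least one but not all slots of I_k are utilized). Then every slot t ∈ [S_{j_x}, C_{j_x}(S*)) with e(t) ≤ e_max^{j_x} is utilized by S*. -/

import Mathlib

open Finset

/-- A schedule: assigns to each unit time slot `[t,t+1)` at most one job;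
each job `j` receives exactly `p j` slots, and no slot at or beyond the horizon `D` is used. -/
structure Schedule (n : ℕ) (p : Fin n → ℕ) (D : ℕ) where
  assign : ℕ → Option (Fin n)
  card_slots : ∀ j : Fin n,
    ((Finset.range D).filter (fun t => assign t = some j)).card = p j
  beyond : ∀ t, D ≤ t → assign t = none

variable {n D : ℕ} {p : Fin n → ℕ}

/-- The set of time slots assigned to job `j`. -/
def jobSlots (S : Schedule n p D) (j : Fin n) : Finset ℕ :=
  (Finset.range D).filter (fun t => S.assign t = some j)

/-- The start time of job `j`: the least `t` with `S.assign t = some j`. -/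
noncomputable def startTime (S : Schedule n p D) (j : Fin n) : ℕ :=
  sInf {t | S.assign t = some j}

/-- The completion time of job `j`: one plus the greatest `t` with `S.assign t = some j`. -/
def completion (S : Schedule n p D) (j : Fin n) : ℕ :=
  (jobSlots S j).sup id + 1

/-- The utilization cost of a schedule: total tariff of all utilized slots. -/
def ucost (e : ℕ → ℚ) (S : Schedule n p D) : ℚ :=
  ∑ t ∈ (Finset.range D).filter (fun t => S.assign t ≠ none), e t

/-- The weighted total cost: `∑_j w_j C_j(S) + E(S)`. -/
def wcost (w : Fin n → ℚ) (e : ℕ → ℚ) (S : Schedule n p D) : ℚ :=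
  (∑ j : Fin n, w j * (completion S j : ℚ)) + ucost e S

/-- `S` processes jobs in the order of their indices: every slot of a smaller-indexed
job precedes every slot of a larger-indexed job. -/
def RespectsOrder (S : Schedule n p D) : Prop :=
  ∀ j k : Fin n, j < k → ∀ t t', S.assign t = some j → S.assign t' = some k → t < t'

/-- The tie-breaking value `∑_{t utilized} t`. -/
def tieVal (S : Schedule n p D) : ℕ :=
  ∑ t ∈ (Finset.range D).filter (fun t => S.assign t ≠ none), t

/-- Membership in the set `P = (⋃_k {s_k, s_k+1}) ∪ {D}` of potential split points,
for boundaries `σ : Fin (K+1) → ℕ` (0-based: interval `k` is `[σ k.castSucc, σ k.succ)`). -/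
def inP (K : ℕ) (σ : Fin (K+1) → ℕ) (D t : ℕ) : Prop :=
  (∃ k : Fin K, t = σ k.castSucc ∨ t = σ k.castSucc + 1) ∨ t = D

/-- `t` is a split point of `S`: `t ∈ P` and every job starting before `t` completes by `t`. -/
def IsSplit (K : ℕ) (σ : Fin (K+1) → ℕ) (S : Schedule n p D) (t : ℕ) : Prop :=
  inP K σ D t ∧ ∀ j : Fin n, startTime S j < t ↔ completion S j ≤ t

/-- `e_max^j`: the maximum tariff among the slots assigned to job `j`. -/
def emax (e : ℕ → ℚ) (S : Schedule n p D) (j : Fin n) : ℚ :=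
  WithBot.unbotD 0 (((jobSlots S j).image e).max)

/-- The quantity `e_max^j + ∑_{j' < j} w_{j'}` whose maximum over a region defines `Δ_x`. -/
def dval (w : Fin n → ℚ) (e : ℕ → ℚ) (S : Schedule n p D) (j : Fin n) : ℚ :=
  emax e S j + ∑ j' ∈ Finset.univ.filter (fun j' => j' < j), w j'

/-!
Suppose that job `j` occupies the slot `s` while a slot `t < C_j` with `e t ≤ e s` is idle.
For an idle slot `u + 1` following a utilized slot `u ≥ C_j - 1`, such that all completions in
`(s, u + 1)` are directly followed by utilized slots, compare two perturbations:
moving all work of `[s, u + 1)` back into the idle slot `u + 1`, freeing `s`, and moving all work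
of `(t, u]` forward into `t`, freeing `u`. Both affect the same weight of completion times, because
no job completes in `(s, C_j)`, so optimality and the tie-breaking rule give `e u < e (u + 1)`.
Hence no such `u + 1` lies in the tariff interval of `u`. The first idle completion time from `C_j`
on and before the end `b` of the region would be such a `u + 1`: it is no split point, hence no
interval boundary. So every completion before `b` is followed by a utilized slot, the slot `b - 1`
is utilized, and by the same comparison the rest of the last interval is utilized as well.
-/

theorem sum_insert_erase_add {α M : Type*} [DecidableEq α] [AddCommMonoid M] {U : Finset α}
    {x y : α} (hx : x ∈ U) (hy : y ∉ U) (f : α → M) :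
    ∑ t ∈ insert y (U.erase x), f t + f x = ∑ t ∈ U, f t + f y := by
  rw [sum_insert (fun h => hy (mem_of_mem_erase h)), add_assoc, sum_erase_add _ _ hx, add_comm]

section FinsetShift

variable {α : Type*} [LinearOrder α] {U : Finset α} {x y : α}

theorem strictMonoOn_of_isLeast_insert {f : α → α} (hy : y ∉ U)
    (hfix : ∀ s, ¬(x ≤ s ∧ s < y) → f s = s)
    (hleast : ∀ s, x ≤ s → s < y → IsLeast {v | v ∈ insert y U ∧ s < v} (f s)) :
    StrictMonoOn f U := by
  intro s _ s' hs' hss'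
  by_cases h : x ≤ s ∧ s < y <;> by_cases h' : x ≤ s' ∧ s' < y
  · exact ((hleast s h.1 h.2).2 ⟨mem_insert_of_mem hs', hss'⟩).trans_lt (hleast s' h'.1 h'.2).1.2
  · have hys' : y < s' := lt_of_le_of_ne (not_lt.1 fun hlt => h' ⟨h.1.trans hss'.le, hlt⟩)
      (ne_of_mem_of_not_mem hs' hy).symm
    rw [hfix s' h']
    exact ((hleast s h.1 h.2).2 ⟨mem_insert_self y U, h.2⟩).trans_lt hys'
  · rw [hfix s h]
    exact hss'.trans (hleast s' h'.1 h'.2).1.2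
  · rwa [hfix s h, hfix s' h']

theorem exists_strictMonoOn_shift_up (hx : x ∈ U) (hy : y ∉ U) (hxy : x < y) :
    ∃ f : α → α, StrictMonoOn f U ∧ U.image f = insert y (U.erase x) ∧
      (∀ s, ¬(x ≤ s ∧ s < y) → f s = s) ∧
      ∀ s, x ≤ s → s < y → IsLeast {v | v ∈ insert y U ∧ s < v} (f s) := by
  have hnext : ∀ s, ∃ v, (¬(x ≤ s ∧ s < y) → v = s) ∧
      (x ≤ s → s < y → IsLeast {v | v ∈ insert y U ∧ s < v} v) := by
    intro s
    by_cases hs : x ≤ s ∧ s < y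
    · have hne : ((insert y U).filter (s < ·)).Nonempty :=
        ⟨y, mem_filter.2 ⟨mem_insert_self y U, hs.2⟩⟩
      refine ⟨((insert y U).filter (s < ·)).min' hne, fun h => absurd hs h, fun _ _ => ?_⟩
      simpa only [coe_filter] using isLeast_min' _ hne
    · exact ⟨s, fun _ => rfl, fun h h' => absurd ⟨h, h'⟩ hs⟩
  choose f hfix hleast using hnext
  have hmono := strictMonoOn_of_isLeast_insert hy hfix hleast
  refine ⟨f, hmono, ?_, hfix, hleast⟩
  apply eq_of_subset_of_card_le
  · intro v hv
    obtain ⟨s, hs, rfl⟩ := mem_image.1 hv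
    by_cases h : x ≤ s ∧ s < y
    · obtain ⟨hmem, hlt⟩ := (hleast s h.1 h.2).1
      have hne : f s ≠ x := (h.1.trans_lt hlt).ne'
      simpa [hne] using hmem
    · have hne : s ≠ x := by rintro rfl; exact h ⟨le_rfl, hxy⟩
      rw [hfix s h]
      exact mem_insert_of_mem (mem_erase.2 ⟨hne, hs⟩)
  · rw [card_image_of_injOn hmono.injOn, card_insert_of_notMem (by simp [hy]),
      card_erase_add_one hx]

theorem exists_strictMonoOn_shift_down (hx : x ∈ U) (hy : y ∉ U) (hyx : y < x) :
    ∃ f : α → α, StrictMonoOn f U ∧ U.image f = insert y (U.erase x) ∧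
      (∀ s, ¬(s ≤ x ∧ y < s) → f s = s) ∧
      ∀ s, s ≤ x → y < s → IsGreatest {v | v ∈ insert y U ∧ v < s} (f s) := by
  obtain ⟨f, hmono, h⟩ := exists_strictMonoOn_shift_up (α := αᵒᵈ) (U := U) hx hy hyx
  exact ⟨f, hmono.dual, h⟩

end FinsetShift

namespace Schedule

variable {S S' : Schedule n p D} {i j : Fin n} {s t x y b : ℕ} {f : ℕ → ℕ}

theorem lt_horizon (h : S.assign t ≠ none) : t < D := by
  by_contra hDt
  exact h (S.beyond t (not_lt.1 hDt))

theorem assign_ne_none (h : S.assign t = some j) : S.assign t ≠ none := by simp [h]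

theorem mem_jobSlots : t ∈ jobSlots S j ↔ S.assign t = some j := by
  simp only [jobSlots, mem_filter, mem_range, and_iff_right_iff_imp]
  exact fun h => lt_horizon (assign_ne_none h)

theorem lt_completion (h : S.assign t = some j) : t < completion S j :=
  Nat.lt_succ_of_le (le_sup (f := id) (mem_jobSlots.2 h))

theorem jobSlots_nonempty (hj : 1 ≤ p j) (S : Schedule n p D) : (jobSlots S j).Nonempty :=
  card_pos.1 ((S.card_slots j).symm ▸ hj)

theorem exists_completion_eq_succ (hj : 1 ≤ p j) (S : Schedule n p D) :
    ∃ t, S.assign t = some j ∧ completion S j = t + 1 := by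
  obtain ⟨t, ht, hsup⟩ := exists_mem_eq_sup _ (jobSlots_nonempty hj S) id
  exact ⟨t, mem_jobSlots.1 ht, congrArg (· + 1) hsup⟩

theorem startTime_le (h : S.assign t = some j) : startTime S j ≤ t := Nat.sInf_le h

theorem assign_startTime (hj : 1 ≤ p j) (S : Schedule n p D) :
    S.assign (startTime S j) = some j := by
  obtain ⟨t, ht, -⟩ := exists_completion_eq_succ hj S
  exact Nat.sInf_mem (s := {t | S.assign t = some j}) ⟨t, ht⟩

theorem exists_tariff_eq_emax (hj : 1 ≤ p j) (e : ℕ → ℚ) (S : Schedule n p D) :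
    ∃ t, S.assign t = some j ∧ e t = emax e S j := by
  obtain ⟨m, hm⟩ := max_of_nonempty ((jobSlots_nonempty hj S).image e)
  obtain ⟨t, ht, rfl⟩ := mem_image.1 (mem_of_max hm)
  exact ⟨t, mem_jobSlots.1 ht, by rw [emax, hm, WithBot.unbotD_coe]⟩

/-- The set of utilized slots of a schedule. -/
def utilizedSlots (S : Schedule n p D) : Finset ℕ :=
  (range D).filter (fun t => S.assign t ≠ none)

theorem mem_utilizedSlots : t ∈ S.utilizedSlots ↔ S.assign t ≠ none := by
  simp only [utilizedSlots, mem_filter, mem_range, and_iff_right_iff_imp]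
  exact lt_horizon

/-- `S'` arises from `S` by moving the content of every utilized slot `s` to the slot `f s`. -/
def IsRelocation (f : ℕ → ℕ) (S S' : Schedule n p D) : Prop :=
  ∀ t j, S'.assign t = some j ↔ ∃ s, S.assign s = some j ∧ f s = t

theorem exists_isRelocation (S : Schedule n p D) (hf : Set.InjOn f S.utilizedSlots)
    (hD : ∀ s ∈ S.utilizedSlots, f s < D) : ∃ S', IsRelocation f S S' := by
  let assign' : ℕ → Option (Fin n) := fun t =>
    if t ∈ S.utilizedSlots.image f then S.assign (Function.invFunOn f S.utilizedSlots t) else none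
  have hassign' : ∀ t j, assign' t = some j ↔ ∃ s, S.assign s = some j ∧ f s = t := by
    intro t j
    simp only [assign', mem_image, Option.ite_none_right_eq_some]
    constructor
    · rintro ⟨⟨s, hs, rfl⟩, h⟩
      exact ⟨s, by rwa [hf.leftInvOn_invFunOn hs] at h, rfl⟩
    · rintro ⟨s, h, rfl⟩
      have hs : s ∈ S.utilizedSlots := mem_utilizedSlots.2 (assign_ne_none h)
      exact ⟨⟨s, hs, rfl⟩, by rwa [hf.leftInvOn_invFunOn hs]⟩
  have hutil : ∀ j, ↑(jobSlots S j) ⊆ (S.utilizedSlots : Set ℕ) := fun j s hs =>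
    mem_utilizedSlots.2 (assign_ne_none (mem_jobSlots.1 hs))
  refine ⟨⟨assign', fun j => ?_, fun t hDt => ?_⟩, hassign'⟩
  · have himage : (range D).filter (fun t => assign' t = some j) = (jobSlots S j).image f := by
      ext t
      simp only [mem_filter, mem_range, hassign', mem_image, mem_jobSlots, and_iff_right_iff_imp]
      rintro ⟨s, hs, rfl⟩
      exact hD s (hutil j (mem_jobSlots.2 hs))
    rw [himage, card_image_of_injOn (hf.mono (hutil j))]
    exact S.card_slots j
  · refine if_neg fun ht => ?_
    obtain ⟨s, hs, rfl⟩ := mem_image.1 ht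
    exact (hD s hs).not_ge hDt

namespace IsRelocation

theorem utilizedSlots_eq (h : IsRelocation f S S') :
    S'.utilizedSlots = S.utilizedSlots.image f := by
  ext t
  simp only [mem_utilizedSlots, Option.ne_none_iff_exists', mem_image, h t]
  tauto

theorem respectsOrder (h : IsRelocation f S S') (hf : StrictMonoOn f S.utilizedSlots)
    (hS : RespectsOrder S) : RespectsOrder S' := by
  intro i j hij t t' ht ht'
  obtain ⟨s, hs, rfl⟩ := (h t i).1 ht
  obtain ⟨s', hs', rfl⟩ := (h t' j).1 ht'
  exact hf (mem_utilizedSlots.2 (assign_ne_none hs)) (mem_utilizedSlots.2 (assign_ne_none hs'))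
    (hS i j hij s s' hs hs')

theorem completion_eq (h : IsRelocation f S S') (hf : StrictMonoOn f S.utilizedSlots)
    (hj : 1 ≤ p j) (hs : S.assign s = some j) (hsj : completion S j = s + 1) :
    completion S' j = f s + 1 := by
  refine le_antisymm ?_ (lt_completion ((h (f s) j).2 ⟨s, hs, rfl⟩))
  obtain ⟨_, ht, htj⟩ := exists_completion_eq_succ hj S'
  obtain ⟨r, hr, rfl⟩ := (h _ j).1 ht
  have hrs : r ≤ s := by have := lt_completion hr; omega
  rw [htj]
  exact Nat.succ_le_succ (hf.monotoneOn (mem_utilizedSlots.2 (assign_ne_none hr))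
    (mem_utilizedSlots.2 (assign_ne_none hs)) hrs)

end IsRelocation

theorem exists_relocation_insert_erase (hS : RespectsOrder S) (hyD : y < D)
    (hf : StrictMonoOn f S.utilizedSlots)
    (himage : S.utilizedSlots.image f = insert y (S.utilizedSlots.erase x)) :
    ∃ S', IsRelocation f S S' ∧ RespectsOrder S' ∧
      S'.utilizedSlots = insert y (S.utilizedSlots.erase x) := by
  have hD : ∀ s ∈ S.utilizedSlots, f s < D := by
    intro s hs
    rcases mem_insert.1 (himage ▸ mem_image_of_mem f hs) with h | h
    · exact h ▸ hyD
    · exact lt_horizon (mem_utilizedSlots.1 (mem_of_mem_erase h))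
  obtain ⟨S', hS'⟩ := S.exists_isRelocation hf.injOn hD
  exact ⟨S', hS', hS'.respectsOrder hf hS, hS'.utilizedSlots_eq.trans himage⟩

/-- Every job completing strictly between `x` and `y` is immediately followed by a utilized slot.
Under this condition, moving the work of `[x, y)` back into an idle slot `y` delays each of these
jobs by one slot only. -/
def CompletionsFollowed (S : Schedule n p D) (x y : ℕ) : Prop :=
  ∀ j, x < completion S j → completion S j < y → S.assign (completion S j) ≠ none

theorem CompletionsFollowed.succ (h : CompletionsFollowed S x y)
    (hy : x < y → ∀ j, completion S j = y → S.assign y ≠ none) :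
    CompletionsFollowed S x (y + 1) := by
  intro j hxj hjy
  rcases (Nat.lt_succ_iff.1 hjy).lt_or_eq with hlt | heq
  · exact h j hxj hlt
  · exact heq ▸ hy (heq ▸ hxj) j heq

theorem exists_shift_later (hp : ∀ j, 1 ≤ p j) (hS : RespectsOrder S) (hx : S.assign x ≠ none)
    (hy : S.assign y = none) (hxy : x < y) (hyD : y < D) (hfol : CompletionsFollowed S x y) :
    ∃ S' : Schedule n p D, RespectsOrder S' ∧
      S'.utilizedSlots = insert y (S.utilizedSlots.erase x) ∧
      ∀ j, completion S' j ≤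
        completion S j + if x < completion S j ∧ completion S j ≤ y then 1 else 0 := by
  obtain ⟨f, hf, himage, hfix, hleast⟩ := exists_strictMonoOn_shift_up
    (mem_utilizedSlots.2 hx) (mem_utilizedSlots.not.2 (not_not.2 hy)) hxy
  obtain ⟨S', hrel, hS', hutil⟩ := exists_relocation_insert_erase hS hyD hf himage
  refine ⟨S', hS', hutil, fun j => ?_⟩
  obtain ⟨s, hs, hsj⟩ := exists_completion_eq_succ (hp j) S
  rw [hrel.completion_eq hf (hp j) hs hsj, hsj]
  by_cases h : x ≤ s ∧ s < y
  · have hmem : s + 1 ∈ insert y S.utilizedSlots := by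
      rcases (Nat.succ_le_of_lt h.2).eq_or_lt with heq | hlt
      · exact mem_insert.2 (Or.inl heq)
      · exact mem_insert_of_mem (mem_utilizedSlots.2
          (hsj ▸ hfol j (hsj ▸ Nat.lt_succ_of_le h.1) (hsj ▸ hlt)))
    have := (hleast s h.1 h.2).2 ⟨hmem, Nat.lt_succ_self s⟩
    rw [if_pos (by omega)]
    omega
  · rw [hfix s h]
    omega

theorem exists_shift_earlier (hp : ∀ j, 1 ≤ p j) (hS : RespectsOrder S) (hx : S.assign x ≠ none)
    (hy : S.assign y = none) (hyx : y < x) :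
    ∃ S' : Schedule n p D, RespectsOrder S' ∧
      S'.utilizedSlots = insert y (S.utilizedSlots.erase x) ∧
      ∀ j, (completion S' j + if y < completion S j ∧ completion S j ≤ x + 1 then 1 else 0) ≤
        completion S j := by
  obtain ⟨f, hf, himage, hfix, hgreatest⟩ := exists_strictMonoOn_shift_down
    (mem_utilizedSlots.2 hx) (mem_utilizedSlots.not.2 (not_not.2 hy)) hyx
  obtain ⟨S', hrel, hS', hutil⟩ :=
    exists_relocation_insert_erase hS (hyx.trans (lt_horizon hx)) hf himage
  refine ⟨S', hS', hutil, fun j => ?_⟩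
  obtain ⟨s, hs, hsj⟩ := exists_completion_eq_succ (hp j) S
  have hsy : s ≠ y := by rintro rfl; exact assign_ne_none hs hy
  rw [hrel.completion_eq hf (hp j) hs hsj, hsj]
  by_cases h : s ≤ x ∧ y < s
  · have hlt : f s < s := (hgreatest s h.1 h.2).1.2
    split_ifs <;> omega
  · rw [hfix s h, if_neg (by omega)]

/-- The total weight of the jobs completing in `(x, y]`, which is the change of the weighted
completion times when each of these jobs completes one slot earlier or later. -/
def completedWeight (w : Fin n → ℚ) (S : Schedule n p D) (x y : ℕ) : ℚ :=
  ∑ j with x < completion S j ∧ completion S j ≤ y, w j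

theorem sum_mul_add_completedWeight (w : Fin n → ℚ) (S : Schedule n p D) (x y : ℕ)
    (c : Fin n → ℕ) :
    ∑ j, w j * c j + completedWeight w S x y =
      ∑ j, w j * (c j + if x < completion S j ∧ completion S j ≤ y then 1 else 0 : ℕ) := by
  rw [completedWeight, sum_filter, ← sum_add_distrib]
  refine sum_congr rfl fun j _ => ?_
  split_ifs <;> push_cast <;> ring

theorem ucost_add_of_utilizedSlots_eq (hx : S.assign x ≠ none) (hy : S.assign y = none)
    (h : S'.utilizedSlots = insert y (S.utilizedSlots.erase x)) (e : ℕ → ℚ) :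
    ucost e S' + e x = ucost e S + e y := by
  have := sum_insert_erase_add (mem_utilizedSlots.2 hx) (mem_utilizedSlots.not.2 (not_not.2 hy)) e
  rwa [← h] at this

theorem tieVal_add_of_utilizedSlots_eq (hx : S.assign x ≠ none) (hy : S.assign y = none)
    (h : S'.utilizedSlots = insert y (S.utilizedSlots.erase x)) :
    tieVal S' + x = tieVal S + y := by
  have := sum_insert_erase_add (mem_utilizedSlots.2 hx) (mem_utilizedSlots.not.2 (not_not.2 hy)) id
  rwa [← h] at this

theorem completion_le_completion_of_lt (hS : RespectsOrder S) (hp : ∀ j, 1 ≤ p j)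
    (hs : S.assign s = some j) (hsi : s < completion S i) : completion S j ≤ completion S i := by
  obtain ⟨r, hr, hri⟩ := exists_completion_eq_succ (hp i) S
  obtain ⟨l, hl, hlj⟩ := exists_completion_eq_succ (hp j) S
  rcases lt_trichotomy i j with hij | rfl | hji
  · have := hS i j hij r s hr hs
    omega
  · exact le_rfl
  · have := hS j i hji l r hl hr
    omega

theorem startTime_lt_completion_iff (hS : RespectsOrder S) (hp : ∀ j, 1 ≤ p j) (i j : Fin n) :
    startTime S i < completion S j ↔ completion S i ≤ completion S j :=
  ⟨completion_le_completion_of_lt hS hp (assign_startTime (hp i) S),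
    (lt_completion (assign_startTime (hp i) S)).trans_le⟩

theorem exists_utilized_succ_eq (hp : ∀ j, 1 ≤ p j)
    (hb : ∀ j, startTime S j < b → completion S j ≤ b) (hs : S.assign s ≠ none) (hsb : s < b)
    (hfol : CompletionsFollowed S s b) : ∃ u, S.assign u ≠ none ∧ u + 1 = b := by
  have hne : (S.utilizedSlots.filter (· < b)).Nonempty :=
    ⟨s, mem_filter.2 ⟨mem_utilizedSlots.2 hs, hsb⟩⟩
  obtain ⟨u, hu, hmax⟩ := exists_max_image _ id hne
  simp only [mem_filter, mem_utilizedSlots, id_eq, and_imp] at hu hmax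
  obtain ⟨i, hi⟩ := Option.ne_none_iff_exists'.1 hu.1
  obtain ⟨r, hr, hri⟩ := exists_completion_eq_succ (hp i) S
  have hrb : r + 1 ≤ b := hri ▸ hb i ((startTime_le hi).trans_lt hu.2)
  have hur : u < r + 1 := hri ▸ lt_completion hi
  have hru : r = u := (hmax r (assign_ne_none hr) hrb).antisymm (Nat.lt_succ_iff.1 hur)
  subst hru
  refine ⟨r, hu.1, hrb.antisymm (not_lt.1 fun hlt => ?_)⟩
  have hnext : S.assign (r + 1) ≠ none :=
    hri ▸ hfol i (hri ▸ Nat.lt_succ_of_le (hmax s hs hsb)) (hri ▸ hlt)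
  exact (hmax (r + 1) hnext hlt).not_gt (Nat.lt_succ_self r)

end Schedule

/-- `S` is a canonical optimal schedule for the index order: among the schedules respecting that
order it minimizes the cost, and among the minimizers the tie-breaking value. -/
structure IsCanonicalOptimal (w : Fin n → ℚ) (e : ℕ → ℚ) (S : Schedule n p D) : Prop where
  respectsOrder : RespectsOrder S
  wcost_le : ∀ S' : Schedule n p D, RespectsOrder S' → wcost w e S ≤ wcost w e S'
  tieVal_le : ∀ S' : Schedule n p D, RespectsOrder S' → wcost w e S' = wcost w e S →
    tieVal S ≤ tieVal S'

/-- The points `σ` partition `[0, D)` into (possibly empty) intervals on each of which the tariff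
`e` is constant. -/
structure IsTariffPartition {K : ℕ} (σ : Fin (K + 1) → ℕ) (D : ℕ) (e : ℕ → ℚ) : Prop where
  first : σ 0 = 0
  last : σ (Fin.last K) = D
  mono : Monotone σ
  tariff_eq : ∀ (k : Fin K) (t t' : ℕ), σ k.castSucc ≤ t → t < σ k.succ →
    σ k.castSucc ≤ t' → t' < σ k.succ → e t = e t'

namespace IsTariffPartition

variable {K : ℕ} {σ : Fin (K + 1) → ℕ} {e : ℕ → ℚ} {t : ℕ}

theorem le_horizon (hσ : IsTariffPartition σ D e) (i : Fin (K + 1)) : σ i ≤ D :=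
  (hσ.mono (Fin.le_last i)).trans_eq hσ.last

theorem exists_interval (hσ : IsTariffPartition σ D e) (ht : t < D) :
    ∃ k : Fin K, σ k.castSucc ≤ t ∧ t < σ k.succ := by
  by_contra! hnot
  have hle : ∀ i, σ i ≤ t := fun i => by
    induction i using Fin.induction with
    | zero => exact hσ.first.trans_le (Nat.zero_le t)
    | succ k ih => exact hnot k ih
  exact (hσ.last.symm.trans_le (hle (Fin.last K))).not_gt ht

theorem tariff_eq_succ (hσ : IsTariffPartition σ D e) (ht : t + 1 < D)
    (hP : ¬ inP K σ D (t + 1)) : e t = e (t + 1) := by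
  obtain ⟨k, hk, hk'⟩ := hσ.exists_interval ht
  have hne : t + 1 ≠ σ k.castSucc := fun h => hP (Or.inl ⟨k, Or.inl h⟩)
  exact hσ.tariff_eq k _ _ (by omega) (by omega) hk hk'

end IsTariffPartition

namespace IsCanonicalOptimal

open Schedule

variable {w : Fin n → ℚ} {e : ℕ → ℚ} {S : Schedule n p D} {j : Fin n} {s t u x y b : ℕ}
  {K : ℕ} {σ : Fin (K + 1) → ℕ} {k : Fin K}

theorem tariff_le_of_completionsFollowed (hS : IsCanonicalOptimal w e S) (hp : ∀ j, 1 ≤ p j)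
    (hw : ∀ j, 0 ≤ w j) (hx : S.assign x ≠ none) (hy : S.assign y = none) (hxy : x < y)
    (hyD : y < D) (hfol : CompletionsFollowed S x y) :
    e x ≤ e y + completedWeight w S x y := by
  obtain ⟨S', hS', hutil, hcompl⟩ := exists_shift_later hp hS.respectsOrder hx hy hxy hyD hfol
  have hweighted : ∑ j, w j * (completion S' j : ℚ) ≤
      ∑ j, w j * (completion S j : ℚ) + completedWeight w S x y := by
    rw [sum_mul_add_completedWeight]
    exact sum_le_sum fun j _ => mul_le_mul_of_nonneg_left (Nat.cast_le.2 (hcompl j)) (hw j)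
  have hucost := ucost_add_of_utilizedSlots_eq hx hy hutil e
  have hopt := hS.wcost_le S' hS'
  unfold wcost at hopt
  linarith

theorem tariff_add_completedWeight_lt (hS : IsCanonicalOptimal w e S) (hp : ∀ j, 1 ≤ p j)
    (hw : ∀ j, 0 ≤ w j) (hx : S.assign x ≠ none) (hy : S.assign y = none) (hyx : y < x) :
    e x + completedWeight w S y (x + 1) < e y := by
  obtain ⟨S', hS', hutil, hcompl⟩ := exists_shift_earlier hp hS.respectsOrder hx hy hyx
  have hweighted : ∑ j, w j * (completion S' j : ℚ) + completedWeight w S y (x + 1) ≤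
      ∑ j, w j * (completion S j : ℚ) := by
    rw [sum_mul_add_completedWeight]
    exact sum_le_sum fun j _ => mul_le_mul_of_nonneg_left (Nat.cast_le.2 (hcompl j)) (hw j)
  have hucost := ucost_add_of_utilizedSlots_eq hx hy hutil e
  have htie := tieVal_add_of_utilizedSlots_eq hx hy hutil
  have hopt := hS.wcost_le S' hS'
  by_contra! hle
  have heq : wcost w e S' = wcost w e S := by
    refine le_antisymm ?_ hopt
    unfold wcost
    linarith
  have := hS.tieVal_le S' hS' heq
  omega

theorem tariff_lt_of_idle_lt_utilized (hS : IsCanonicalOptimal w e S) (hp : ∀ j, 1 ≤ p j)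
    (hw : ∀ j, 0 ≤ w j) (hx : S.assign x ≠ none) (hy : S.assign y = none) (hyx : y < x) :
    e x < e y :=
  (le_add_of_nonneg_right (sum_nonneg fun j _ => hw j)).trans_lt
    (hS.tariff_add_completedWeight_lt hp hw hx hy hyx)

theorem tariff_lt_succ_of_cheap_idle (hS : IsCanonicalOptimal w e S) (hp : ∀ j, 1 ≤ p j)
    (hw : ∀ j, 0 ≤ w j) (hs : S.assign s = some j) (ht : S.assign t = none)
    (htj : t < completion S j) (hle : e t ≤ e s) (hu : S.assign u ≠ none)
    (hu' : S.assign (u + 1) = none) (huD : u + 1 < D) (hju : completion S j ≤ u + 1)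
    (hfol : CompletionsFollowed S s (u + 1)) : e u < e (u + 1) := by
  have htu : t < u :=
    lt_of_le_of_ne (Nat.lt_succ_iff.1 (htj.trans_le hju)) (by rintro rfl; exact hu ht)
  have hlater := hS.tariff_le_of_completionsFollowed hp hw (assign_ne_none hs) hu'
    ((lt_completion hs).trans_le hju) huD hfol
  have hearlier := hS.tariff_add_completedWeight_lt hp hw hu ht htu
  have hweight : completedWeight w S s (u + 1) ≤ completedWeight w S t (u + 1) := by
    refine sum_le_sum_of_subset_of_nonneg (fun i hi => ?_) fun i _ _ => hw i
    simp only [mem_filter, mem_univ, true_and] at hi ⊢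
    have hji := completion_le_completion_of_lt hS.respectsOrder hp hs hi.1
    exact ⟨htj.trans_le hji, hi.2⟩
  linarith

theorem completionsFollowed_of_cheap_idle (hS : IsCanonicalOptimal w e S) (hp : ∀ j, 1 ≤ p j)
    (hw : ∀ j, 0 ≤ w j) (hσ : IsTariffPartition σ D e) (hs : S.assign s = some j)
    (ht : S.assign t = none) (htj : t < completion S j) (hle : e t ≤ e s) (hbD : b ≤ D)
    (hnext : ∀ r, s < r → r < b → ¬ IsSplit K σ S r) : CompletionsFollowed S s b := by
  induction b with
  | zero => exact fun i _ h => absurd h (Nat.not_lt_zero _)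
  | succ g ih =>
    have hfol := ih (by omega) fun r hr hrg => hnext r hr (by omega)
    refine hfol.succ fun hsg i hig hidle => ?_
    obtain ⟨r, hr, hri⟩ := exists_completion_eq_succ (hp i) S
    obtain rfl : r + 1 = g := hri ▸ hig
    have hji := completion_le_completion_of_lt hS.respectsOrder hp hs (hig ▸ hsg)
    have hnotP : ¬ inP K σ D (r + 1) := fun hP => hnext _ hsg (Nat.lt_succ_self _)
      ⟨hP, hig ▸ (startTime_lt_completion_iff hS.respectsOrder hp · i)⟩
    exact (hS.tariff_lt_succ_of_cheap_idle hp hw hs ht htj hle (assign_ne_none hr) hidle hbD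
      (hig ▸ hji) hfol).ne (hσ.tariff_eq_succ hbD hnotP)

theorem utilized_of_cheap_idle (hS : IsCanonicalOptimal w e S) (hp : ∀ j, 1 ≤ p j)
    (hw : ∀ j, 0 ≤ w j) (hσ : IsTariffPartition σ D e) (hs : S.assign s = some j)
    (ht : S.assign t = none) (htj : t < completion S j) (hle : e t ≤ e s)
    (hu : S.assign u ≠ none) (hku : σ k.castSucc ≤ u) (hju : completion S j ≤ u + 1)
    (hfol : CompletionsFollowed S s (u + 1)) (hux : u ≤ x) (hxk : x < σ k.succ) :
    S.assign x ≠ none := by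
  suffices h : S.assign x ≠ none ∧ CompletionsFollowed S s (x + 1) from h.1
  induction x, hux using Nat.le_induction with
  | base => exact ⟨hu, hfol⟩
  | succ v huv ih =>
    obtain ⟨hv, hfolv⟩ := ih (by omega)
    have hv' : S.assign (v + 1) ≠ none := fun hidle =>
      (hS.tariff_lt_succ_of_cheap_idle hp hw hs ht htj hle hv hidle
        (hxk.trans_le (hσ.le_horizon _)) (by omega) hfolv).ne
        (hσ.tariff_eq k _ _ (by omega) (by omega) (by omega) hxk)
    exact ⟨hv', hfolv.succ fun _ _ _ => hv'⟩

end IsCanonicalOptimal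

open Schedule in
theorem cheap_slots_utilized_general {w : Fin n → ℚ} {e : ℕ → ℚ} {S : Schedule n p D} {K : ℕ}
    {σ : Fin (K + 1) → ℕ} {j : Fin n} {b : ℕ} {k : Fin K} (hS : IsCanonicalOptimal w e S)
    (hp : ∀ j, 1 ≤ p j) (hw : ∀ j, 0 ≤ w j) (hσ : IsTariffPartition σ D e)
    (hb : IsSplit K σ S b) (hjb : startTime S j < b)
    (hnext : ∀ t, startTime S j < t → t < b → ¬ IsSplit K σ S t)
    (hkb : σ k.castSucc < b) (hbk : b ≤ σ k.succ)
    (hidle : ∃ t, σ k.castSucc ≤ t ∧ t < σ k.succ ∧ S.assign t = none) :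
    ∀ t < completion S j, e t ≤ emax e S j → S.assign t ≠ none := by
  intro t htj hle ht
  obtain ⟨s, hs, hes⟩ := exists_tariff_eq_emax (hp j) e S
  rw [← hes] at hle
  have hjb' : completion S j ≤ b := (hb.2 j).1 hjb
  have hfol : CompletionsFollowed S s b :=
    hS.completionsFollowed_of_cheap_idle hp hw hσ hs ht htj hle (hbk.trans (hσ.le_horizon _))
      fun r hr => hnext r ((startTime_le hs).trans_lt hr)
  obtain ⟨u, hu, rfl⟩ := exists_utilized_succ_eq hp (fun i => (hb.2 i).1) (assign_ne_none hs)
    ((lt_completion hs).trans_le hjb') hfol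
  obtain ⟨y, hky, hyk, hy⟩ := hidle
  rcases lt_or_ge y u with hyu | huy
  · exact (hS.tariff_lt_of_idle_lt_utilized hp hw hu hy hyu).ne
      (hσ.tariff_eq k u y (by omega) (by omega) hky hyk)
  · exact hS.utilized_of_cheap_idle hp hw hσ hs ht htj hle hu (by omega) hjb' hfol huy hyk hy

/-- If the last interval of a region is partially utilized, then every slot in
`[S_(j_x), C_(j_x))` with tariff at most `e_max^(j_x)` is utilized. -/
theorem cheap_slots_utilized (n : ℕ) (p : Fin n → ℕ) (hp : ∀ j, 1 ≤ p j)
    (w : Fin n → ℚ) (hw : ∀ j, 0 ≤ w j)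
    (e : ℕ → ℚ) (he : ∀ t, 0 ≤ e t) (D : ℕ) (hD : ∑ j, p j ≤ D)
    (K : ℕ) (σ : Fin (K+1) → ℕ) (hσ0 : σ 0 = 0) (hσD : σ (Fin.last K) = D)
    (hmono : StrictMono σ) (ec : Fin K → ℚ)
    (hconst : ∀ k : Fin K, ∀ t, σ k.castSucc ≤ t → t < σ k.succ → e t = ec k)
    (S : Schedule n p D) (hord : RespectsOrder S)
    (hopt : ∀ S' : Schedule n p D, RespectsOrder S' → wcost w e S ≤ wcost w e S')
    (htie : ∀ S' : Schedule n p D, RespectsOrder S' → wcost w e S' = wcost w e S →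
      tieVal S ≤ tieVal S')
    (a b : ℕ) (hsa : IsSplit K σ S a) (hsb : IsSplit K σ S b) (hab : a < b)
    (hcons : ∀ t, a < t → t < b → ¬ IsSplit K σ S t)
    (jx : Fin n) (hjx_start : a ≤ startTime S jx ∧ startTime S jx < b)
    (hjx_max : ∀ j : Fin n, a ≤ startTime S j → startTime S j < b →
      dval w e S j ≤ dval w e S jx)
    (hjx_last : ∀ j : Fin n, a ≤ startTime S j → startTime S j < b →
      dval w e S j = dval w e S jx → j ≤ jx)
    (k : Fin K)
    (hlast : (∃ t, a ≤ t ∧ t < b ∧ σ k.castSucc ≤ t ∧ t < σ k.succ) ∧ b ≤ σ k.succ)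
    (hpart1 : ∃ t, σ k.castSucc ≤ t ∧ t < σ k.succ ∧ S.assign t ≠ none)
    (hpart2 : ∃ t, σ k.castSucc ≤ t ∧ t < σ k.succ ∧ S.assign t = none) :
    ∀ t : ℕ, startTime S jx ≤ t → t < completion S jx →
      e t ≤ emax e S jx → S.assign t ≠ none :=
  fun t _ => cheap_slots_utilized_general ⟨hord, hopt, htie⟩ hp hw
    ⟨hσ0, hσD, hmono.monotone, fun k t t' ht ht' hs hs' =>
      (hconst k t ht ht').trans (hconst k t' hs hs').symm⟩
    hsb hjx_start.2 (fun r hr => hcons r (hjx_start.1.trans_lt hr))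
    (hlast.1.elim fun _ ht => ht.2.2.1.trans_lt ht.2.1) hlast.2 hpart2 t
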